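/- arXiv:1602.08247 — 5 statements merged into one kernel-verified Lean document; each statement's English description precedes it below -/
import Mathlib

section
/- For every n ≥ 1, the set of extreme points of the permutahedron P_n is exactly {v_σ : σ a permutation of [n]}, and the map σ ↦ v_σ is injective; consequently P_n has exactly n! vertices. -/
open scoped BigOperators

/-- The vertex of the permutahedron associated to a permutation `σ` of `[n]`:
the vector `(σ⁻¹(1), …, σ⁻¹(n))`, with values in `{1, …, n}`. -/
noncomputable def permVec (n : ℕ) (σ : Equiv.Perm (Fin n)) : EuclideanSpace ℝ (Fin n) :=
  WithLp.toLp 2 (fun i => ((σ.symm i : ℕ) + 1 : ℝ))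

/-- The permutahedron `P_n ⊆ ℝⁿ`: the convex hull of the vertices `v_σ`. -/
noncomputable def permutahedron (n : ℕ) : Set (EuclideanSpace ℝ (Fin n)) :=
  convexHull ℝ (Set.range (permVec n))

/-!
The vectors `v_σ` all arise from one vector by permuting coordinates, so they lie on a common sphere
centred at the origin. Euclidean balls are strictly convex, hence every point of such a sphere is
extreme in the closed ball, and a fortiori in the smaller convex set `P_n`.
-/

open Metric

section ConvexHull

variable {𝕜 E : Type*} [Ring 𝕜] [LinearOrder 𝕜] [IsStrictOrderedRing 𝕜] [DenselyOrdered 𝕜]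
  [AddCommGroup E] [Module 𝕜 E] [Module.IsTorsionFree 𝕜 E] {s t : Set E}

theorem extremePoints_convexHull_eq_of_subset_extremePoints (ht : Convex 𝕜 t)
    (hst : s ⊆ t.extremePoints 𝕜) : (convexHull 𝕜 s).extremePoints 𝕜 = s := by
  have hull_subset : convexHull 𝕜 s ⊆ t := convexHull_min (hst.trans extremePoints_subset) ht
  refine extremePoints_convexHull_subset.antisymm fun x hx ↦ ?_
  exact inter_extremePoints_subset_extremePoints_of_subset hull_subset
    ⟨subset_convexHull 𝕜 s hx, hst hx⟩

end ConvexHull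

section StrictConvexSpace

variable {E : Type*} [NormedAddCommGroup E] [NormedSpace ℝ E] [StrictConvexSpace ℝ E]

theorem sphere_subset_extremePoints_closedBall (c : E) (r : ℝ) :
    sphere c r ⊆ (closedBall c r).extremePoints ℝ := by
  obtain rfl | hr := eq_or_ne r 0
  · rw [closedBall_zero, extremePoints_singleton, sphere_zero]
  · exact StrictConvexSpace.sphere_subset_extremePoints_closedBall c hr

theorem extremePoints_convexHull_eq_of_subset_sphere {s : Set E} {c : E} {r : ℝ}
    (hs : s ⊆ sphere c r) : (convexHull ℝ s).extremePoints ℝ = s :=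
  extremePoints_convexHull_eq_of_subset_extremePoints (convex_closedBall c r)
    (hs.trans (sphere_subset_extremePoints_closedBall c r))

end StrictConvexSpace

theorem permVec_injective (n : ℕ) : Function.Injective (permVec n) := by
  intro σ τ h
  have symm_eq : σ.symm = τ.symm := by
    ext i
    have coord_eq : ((σ.symm i : ℕ) + 1 : ℝ) = (τ.symm i : ℕ) + 1 :=
      congrArg (fun v ↦ v i) h
    exact_mod_cast add_right_cancel coord_eq
  exact Equiv.symm_bijective.injective symm_eq

theorem piLpCongrLeft_permVec (n : ℕ) (σ τ : Equiv.Perm (Fin n)) :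
    LinearIsometryEquiv.piLpCongrLeft 2 ℝ ℝ σ (permVec n τ) = permVec n (σ * τ) :=
  rfl

theorem norm_permVec_mul (n : ℕ) (σ τ : Equiv.Perm (Fin n)) :
    ‖permVec n (σ * τ)‖ = ‖permVec n τ‖ := by
  rw [← piLpCongrLeft_permVec, LinearIsometryEquiv.norm_map]

theorem range_permVec_subset_sphere (n : ℕ) :
    Set.range (permVec n) ⊆ sphere 0 ‖permVec n 1‖ := by
  rintro _ ⟨σ, rfl⟩
  rw [mem_sphere_zero_iff_norm, ← mul_one σ, norm_permVec_mul]

theorem extremePoints_permutahedron_eq_range (n : ℕ) :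
    (permutahedron n).extremePoints ℝ = Set.range (permVec n) :=
  extremePoints_convexHull_eq_of_subset_sphere (range_permVec_subset_sphere n)

/-- The extreme points of `P_n` are exactly the `v_σ`, the map `σ ↦ v_σ` is injective,
and consequently `P_n` has exactly `n!` vertices. -/
theorem extremePoints_permutahedron (n : ℕ) (hn : 1 ≤ n) :
    Set.extremePoints ℝ (permutahedron n) = Set.range (permVec n) ∧
    Function.Injective (permVec n) ∧
    Nat.card (Set.extremePoints ℝ (permutahedron n)) = Nat.factorial n := by
  refine ⟨extremePoints_permutahedron_eq_range n, permVec_injective n, ?_⟩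
  rw [extremePoints_permutahedron_eq_range, Nat.card_range_of_injective (permVec_injective n),
    Nat.card_perm, Nat.card_fin]
end

section
/- Let n ≥ 1, let k ≥ 1, and let (B₁, …, B_k) be an ordered partition of [n] into nonempty pairwise disjoint sets with union [n]. Then the convex hull of {v_τ : τ a permutation of [n] compatible with (B₁, …, B_k)} is an exposed face of the permutahedron P_n. -/
open scoped BigOperators

/-- A permutation `τ` of `[n]` is compatible with the ordered partition `(B 0, …, B (k-1))`
of `[n]` if for all `p < q`, every element of `B p` occurs before every element of `B q`
in the list `τ(1), …, τ(n)`; i.e. `i ∈ B p` and `j ∈ B q` imply `τ⁻¹(i) < τ⁻¹(j)`. -/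
def PermCompatible (n k : ℕ) (B : Fin k → Finset (Fin n)) (τ : Equiv.Perm (Fin n)) : Prop :=
  ∀ p q : Fin k, p < q → ∀ i ∈ B p, ∀ j ∈ B q, τ.symm i < τ.symm j

/-!
Give each coordinate the index of its block as weight and maximize the resulting linear functional
over the permutahedron. A functional attains its maximum over a convex hull exactly on the hull of
the maximizing generators, so only the vertices matter. By the rearrangement inequality and its
converse, `v_τ` is a maximizer iff its entries are ordered consistently with the weights,
which is compatibility of `τ` with the ordered partition.
-/

open Equiv in
theorem monovary_iff_forall_sum_smul_comp_perm_le {ι α β : Type*} [Fintype ι]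
    [Semiring α] [LinearOrder α] [IsStrictOrderedRing α] [ExistsAddOfLE α]
    [AddCommMonoid β] [LinearOrder β] [IsOrderedCancelAddMonoid β] [Module α β]
    [PosSMulStrictMono α β] {f : ι → α} {g : ι → β} :
    Monovary f g ↔ ∀ π : Perm ι, ∑ i, f i • g (π i) ≤ ∑ i, f i • g i := by
  classical
  refine ⟨fun hfg π => hfg.sum_smul_comp_perm_le_sum_smul, fun hmax i j hg => ?_⟩
  by_contra! hf
  -- Swapping the values of `g` at the oppositely ordered pair `i`, `j` increases the sum.
  have hij : i ≠ j := fun h => hf.ne (congrArg f h.symm)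
  have hpair : ∑ k ∈ {i, j}, f k • g k < ∑ k ∈ {i, j}, f k • g (swap i j k) := by
    simpa [Finset.sum_pair hij, add_comm] using smul_add_smul_lt_smul_add_smul hf hg
  have hrest : ∑ k ∈ {i, j}ᶜ, f k • g (swap i j k) = ∑ k ∈ {i, j}ᶜ, f k • g k :=
    Finset.sum_congr rfl fun k hk => by
      have hk : k ≠ i ∧ k ≠ j := by simpa using hk
      rw [swap_apply_of_ne_of_ne hk.1 hk.2]
  have hle := hmax (swap i j)
  rw [← Finset.sum_add_sum_compl {i, j}, ← Finset.sum_add_sum_compl {i, j}, hrest] at hle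
  exact hpair.not_ge (le_of_add_le_add_right hle)

theorem convexHull_inter_eq_of_isExtreme {𝕜 E : Type*} [Semiring 𝕜] [PartialOrder 𝕜]
    [AddCommMonoid E] [Module 𝕜 E] {s F : Set E}
    (hF : IsExtreme 𝕜 (convexHull 𝕜 s) F) (hconv : Convex 𝕜 F) :
    convexHull 𝕜 (s ∩ F) = F := by
  refine (convexHull_min Set.inter_subset_right hconv).antisymm fun z hz => ?_
  -- The points satisfying the claimed inclusion form a convex set, because a point of `F` inside
  -- an open segment forces both endpoints into `F`.
  let C : Set E := {x ∈ convexHull 𝕜 s | x ∈ F → x ∈ convexHull 𝕜 (s ∩ F)}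
  have hsC : s ⊆ C := fun x hx =>
    ⟨subset_convexHull 𝕜 s hx, fun hxF => subset_convexHull 𝕜 _ ⟨hx, hxF⟩⟩
  have hC : Convex 𝕜 C := by
    refine convex_iff_forall_pos.2 fun x hx y hy a b ha hb hab => ?_
    refine ⟨convex_convexHull 𝕜 s hx.1 hy.1 ha.le hb.le hab, fun hzF => ?_⟩
    have hseg : a • x + b • y ∈ openSegment 𝕜 x y := ⟨a, b, ha, hb, hab, rfl⟩
    have hxF : x ∈ F := hF.left_mem_of_mem_openSegment hx.1 hy.1 hzF hseg
    have hyF : y ∈ F := hF.right_mem_of_mem_openSegment hx.1 hy.1 hzF hseg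
    exact convex_convexHull 𝕜 _ (hx.2 hxF) (hy.2 hyF) ha.le hb.le hab
  exact (convexHull_min hsC hC (hF.subset hz)).2 hz

theorem toExposed_convexHull {𝕜 E : Type*} [TopologicalSpace 𝕜] [Ring 𝕜] [LinearOrder 𝕜]
    [IsStrictOrderedRing 𝕜] [AddCommMonoid E] [TopologicalSpace E] [Module 𝕜 E]
    (l : StrongDual 𝕜 E) (s : Set E) :
    l.toExposed (convexHull 𝕜 s) = convexHull 𝕜 (l.toExposed s) := by
  have hexp : IsExposed 𝕜 (convexHull 𝕜 s) (l.toExposed (convexHull 𝕜 s)) :=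
    ContinuousLinearMap.toExposed.isExposed
  have hinter : s ∩ l.toExposed (convexHull 𝕜 s) = l.toExposed s := by
    ext x
    constructor
    · rintro ⟨hx, -, hmax⟩
      exact ⟨hx, fun y hy => hmax y (subset_convexHull 𝕜 s hy)⟩
    · rintro ⟨hx, hmax⟩
      exact ⟨hx, subset_convexHull 𝕜 s hx, fun y hy =>
        convexHull_min hmax (convex_halfSpace_le l.isLinear (l x)) hy⟩
  rw [← hinter, convexHull_inter_eq_of_isExtreme hexp.isExtreme
    (hexp.convex (convex_convexHull 𝕜 s))]

theorem permVec_inv_mul_apply {n : ℕ} (π σ : Equiv.Perm (Fin n)) (i : Fin n) :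
    permVec n (π⁻¹ * σ) i = permVec n σ (π i) :=
  rfl

theorem permVec_lt_permVec_iff {n : ℕ} {σ : Equiv.Perm (Fin n)} {i j : Fin n} :
    permVec n σ i < permVec n σ j ↔ σ.symm i < σ.symm j := by
  simp [permVec]

theorem forall_inner_permVec_le_iff_monovary {n : ℕ} {w : EuclideanSpace ℝ (Fin n)}
    {σ : Equiv.Perm (Fin n)} :
    (∀ ρ, inner ℝ w (permVec n ρ) ≤ inner ℝ w (permVec n σ)) ↔ Monovary w (permVec n σ) := by
  rw [monovary_iff_forall_sum_smul_comp_perm_le,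
    ((Equiv.inv _).trans (Equiv.mulRight σ)).surjective.forall]
  simp [PiLp.inner_apply, permVec_inv_mul_apply, mul_comm]

theorem toExposed_permutahedron {n : ℕ} (w : EuclideanSpace ℝ (Fin n)) :
    (innerSL ℝ w).toExposed (permutahedron n) =
      convexHull ℝ (permVec n '' {σ | Monovary w (permVec n σ)}) := by
  rw [permutahedron, toExposed_convexHull]
  congr 1
  ext x
  constructor
  · rintro ⟨⟨σ, rfl⟩, hmax⟩
    exact ⟨σ, forall_inner_permVec_le_iff_monovary.1 (Set.forall_mem_range.1 hmax), rfl⟩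
  · rintro ⟨σ, hσ, rfl⟩
    exact ⟨⟨σ, rfl⟩, Set.forall_mem_range.2 (forall_inner_permVec_le_iff_monovary.2 hσ)⟩

theorem permCompatible_iff_monovary {n k : ℕ} {B : Fin k → Finset (Fin n)}
    (P : IndexedPartition fun p => (B p : Set (Fin n))) {τ : Equiv.Perm (Fin n)} :
    PermCompatible n k B τ ↔ Monovary P.index τ.symm := by
  have hmem : ∀ {i p}, i ∈ B p ↔ P.index i = p := P.mem_iff_index_eq
  simp only [PermCompatible, hmem]
  constructor
  · intro hτ i j hij
    by_contra! hlt
    exact (hτ _ _ hlt j rfl i rfl).not_gt hij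
  · rintro hτ _ _ hlt i rfl j rfl
    exact (hτ.symm hlt).lt_of_ne (τ.symm.injective.ne (ne_of_apply_ne P.index hlt.ne))

/-- For any ordered partition `(B 0, …, B (k-1))` of `[n]` into nonempty pairwise disjoint
sets, the convex hull of the vertices `v_τ` for `τ` compatible with the partition is an
exposed face of the permutahedron `P_n`. -/
theorem orderedPartition_face_isExposed (n k : ℕ) (hn : 1 ≤ n) (hk : 1 ≤ k)
    (B : Fin k → Finset (Fin n)) (hne : ∀ r, (B r).Nonempty)
    (hdisj : ∀ p q, p ≠ q → Disjoint (B p) (B q))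
    (hcov : Finset.univ.biUnion B = Finset.univ) :
    IsExposed ℝ (permutahedron n)
      (convexHull ℝ (permVec n '' {τ | PermCompatible n k B τ})) := by
  have hcover : ∀ i, ∃ p, i ∈ B p := fun i => by
    simpa using hcov.ge (Finset.mem_univ i)
  let P : IndexedPartition fun p => (B p : Set (Fin n)) :=
    IndexedPartition.mk' _ (fun p q hpq => Finset.disjoint_coe.2 (hdisj p q hpq)) hne hcover
  let w : EuclideanSpace ℝ (Fin n) := WithLp.toLp 2 fun i => (P.index i : ℝ)
  have hcompat : ∀ τ, PermCompatible n k B τ ↔ Monovary w (permVec n τ) := fun τ => by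
    simp [permCompatible_iff_monovary P, Monovary, permVec_lt_permVec_iff, w]
  simp only [hcompat, ← toExposed_permutahedron]
  exact ContinuousLinearMap.toExposed.isExposed
end

section
/- Let n ≥ 1, let k ≥ 1, and let (B₁, …, B_k) be an ordered partition of [n] into nonempty pairwise disjoint sets with union [n], with m_r = |B_r|. Then there exists an injective affine map f : ℝ^{m₁} × ℝ^{m₂} × ⋯ × ℝ^{m_k} → ℝⁿ whose image of the product P_{m₁} × P_{m₂} × ⋯ × P_{m_k} is exactly the convex hull of {v_τ : τ compatible with (B₁, …, B_k)}. In particular, this face of P_n of dimension n − k is affinely isomorphic to P_{m₁} × P_{m₂} × ⋯ × P_{m_k}. -/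
/-!
Sorting `[n]` by block index, a permutation `τ` (position ↦ element) is compatible with the ordered
partition iff its block sequence is monotone. All rearrangements of a sequence that are monotone
coincide, so the compatible permutations are obtained from a single one by permuting each block
independently. The positions of the block `r` are then the interval that follows all positions of
earlier blocks, so on its coordinates the vertex `v_τ` is a vertex of `P_{m r}` translated by
`m 0 + ⋯ + m (r-1)`. This translation is the affine map, and it commutes with convex hulls.
-/

open scoped BigOperators

section Blocks

variable {ι α : Type*} {B : ι → Finset α}

theorem existsUnique_mem_of_disjoint_of_biUnion_eq_univ [Fintype ι] [Fintype α] [DecidableEq α]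
    (hdisj : ∀ p q, p ≠ q → Disjoint (B p) (B q)) (hcov : Finset.univ.biUnion B = Finset.univ)
    (x : α) : ∃! r, x ∈ B r := by
  obtain ⟨r, -, hr⟩ := Finset.mem_biUnion.mp (hcov ▸ Finset.mem_univ x)
  refine ⟨r, hr, fun q hq => ?_⟩
  by_contra hqr
  exact Finset.disjoint_left.mp (hdisj q r hqr) hq hr

/-- The labelling of the elements of a partitioned type by pairs `(r, j)`, where `r` is the index of
the block and `j` numbers the elements of that block in an arbitrary order. -/
noncomputable def blockEquiv (B : ι → Finset α) (hB : ∀ x, ∃! r, x ∈ B r) :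
    (Σ r, Fin (B r).card) ≃ α :=
  (Equiv.sigmaCongrRight fun r => (B r).equivFin.symm).trans
    (Set.sigmaEquiv (fun r => (B r : Set α)) hB)

theorem blockEquiv_mem (hB : ∀ x, ∃! r, x ∈ B r) (s : Σ r, Fin (B r).card) :
    blockEquiv B hB s ∈ B s.1 :=
  ((B s.1).equivFin.symm s.2).2

theorem mem_iff_fst_blockEquiv_symm (hB : ∀ x, ∃! r, x ∈ B r) {x : α} {r : ι} :
    x ∈ B r ↔ ((blockEquiv B hB).symm x).1 = r := by
  have hx : x ∈ B ((blockEquiv B hB).symm x).1 := by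
    simpa using blockEquiv_mem hB ((blockEquiv B hB).symm x)
  exact ⟨(hB x).unique hx, fun hr => hr ▸ hx⟩

theorem exists_sigmaCongrRight_eq_of_fst_eq {β : ι → Type*} (π : Equiv.Perm (Σ i, β i))
    (hπ : ∀ s, (π s).1 = s.1) :
    ∃ σ : ∀ i, Equiv.Perm (β i), Equiv.Perm.sigmaCongrRight σ = π := by
  let σ (i : ι) : Equiv.Perm (β i) :=
    (Equiv.sigmaSubtype i).permCongr (π.subtypePerm fun s => by rw [hπ])
  refine ⟨σ, Equiv.ext fun ⟨i, x⟩ => ?_⟩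
  let πx : {s : Σ i, β i // s.1 = i} := ⟨π ⟨i, x⟩, hπ _⟩
  exact congrArg Subtype.val ((Equiv.sigmaSubtype i).symm_apply_apply πx)

end Blocks

section Concatenation

variable {k n : ℕ} (m : Fin k → ℕ)

/-- The number of positions preceding block `r` when blocks of sizes `m 0, m 1, …` are
concatenated. -/
def blockOffset (r : Fin k) : ℕ := ∑ i ∈ Finset.Iio r, m i

theorem blockOffset_add_le {p q : Fin k} (hpq : p < q) :
    blockOffset m p + m p ≤ blockOffset m q := by
  calc blockOffset m p + m p = ∑ i ∈ Finset.Iic p, m i := Finset.sum_Iio_add_eq_sum_Iic p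
    _ ≤ blockOffset m q :=
        Finset.sum_le_sum_of_subset fun i hi =>
          Finset.mem_Iio.mpr ((Finset.mem_Iic.mp hi).trans_lt hpq)

/-- The position of the pair `(r, j)` when blocks of sizes `m 0, m 1, …` are concatenated. -/
def concatEquiv (hm : ∑ r, m r = n) : (Σ r, Fin (m r)) ≃ Fin n :=
  finSigmaFinEquiv.trans (finCongr hm)

variable {m}

theorem val_concatEquiv (hm : ∑ r, m r = n) (s : Σ r, Fin (m r)) :
    (concatEquiv m hm s : ℕ) = blockOffset m s.1 + s.2 := by
  have hsum : ∑ i : Fin s.1, m (Fin.castLE s.1.2.le i) = blockOffset m s.1 := by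
    refine Finset.sum_bij (fun i _ => Fin.castLE s.1.2.le i) ?_ ?_ ?_ fun _ _ => rfl
    · simp [Fin.lt_def]
    · simp
    · exact fun r hr => ⟨⟨r, Fin.lt_def.mp (Finset.mem_Iio.mp hr)⟩, Finset.mem_univ _, rfl⟩
  simp [concatEquiv, hsum]

theorem concatEquiv_lt_of_fst_lt (hm : ∑ r, m r = n) {s t : Σ r, Fin (m r)} (hst : s.1 < t.1) :
    concatEquiv m hm s < concatEquiv m hm t := by
  have := blockOffset_add_le m hst
  rw [Fin.lt_def, val_concatEquiv, val_concatEquiv]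
  omega

theorem monotone_fst_concatEquiv_symm (hm : ∑ r, m r = n) :
    Monotone fun p => ((concatEquiv m hm).symm p).1 := by
  intro p q hpq
  by_contra! h
  exact hpq.not_gt (by simpa using concatEquiv_lt_of_fst_lt hm h)

/-- The permutation of `[n]` that lists the blocks one after the other, the elements of block `r`
being listed in the order `σ r`. Like `τ` in `permVec`, it maps positions to elements. -/
def concatPerm (hm : ∑ r, m r = n) (e : (Σ r, Fin (m r)) ≃ Fin n)
    (σ : ∀ r, Equiv.Perm (Fin (m r))) : Equiv.Perm (Fin n) :=
  (concatEquiv m hm).symm.trans ((Equiv.Perm.sigmaCongrRight σ).trans e)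

theorem val_concatPerm_symm (hm : ∑ r, m r = n) (e : (Σ r, Fin (m r)) ≃ Fin n)
    (σ : ∀ r, Equiv.Perm (Fin (m r))) (i : Fin n) :
    ((concatPerm hm e σ).symm i : ℕ) =
      blockOffset m (e.symm i).1 + (σ (e.symm i).1).symm (e.symm i).2 :=
  val_concatEquiv hm _

theorem range_concatPerm (hm : ∑ r, m r = n) (e : (Σ r, Fin (m r)) ≃ Fin n) :
    Set.range (concatPerm hm e) = {τ | Monotone fun p => (e.symm (τ p)).1} := by
  have hconcat (σ) : Monotone fun p => (e.symm (concatPerm hm e σ p)).1 := by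
    simpa [concatPerm] using monotone_fst_concatEquiv_symm hm
  refine Set.Subset.antisymm (Set.range_subset_iff.mpr hconcat) fun τ hτ => ?_
  have hfst : (fun p => (e.symm (τ p)).1) = fun p => ((concatEquiv m hm).symm p).1 := by
    simpa [concatPerm, Function.comp_def] using
      Tuple.unique_monotone (f := fun i => (e.symm i).1) hτ (hconcat fun _ => 1)
  obtain ⟨σ, hσ⟩ := exists_sigmaCongrRight_eq_of_fst_eq ((concatEquiv m hm).trans (τ.trans e.symm))
    fun s => by simpa using congrFun hfst (concatEquiv m hm s)
  exact ⟨σ, by ext p; simp [concatPerm, hσ]⟩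

end Concatenation

theorem permCompatible_iff_monotone {n k : ℕ} {B : Fin k → Finset (Fin n)} {b : Fin n → Fin k}
    (hb : ∀ {i r}, i ∈ B r ↔ b i = r) {τ : Equiv.Perm (Fin n)} :
    PermCompatible n k B τ ↔ Monotone fun p => b (τ p) := by
  constructor
  · intro hτ p q hpq
    by_contra! h
    exact hpq.not_gt (by simpa using hτ _ _ h _ (hb.mpr rfl) _ (hb.mpr rfl))
  · intro hτ p q hpq i hi j hj
    refine hτ.reflect_lt ?_
    simpa [hb.mp hi, hb.mp hj] using hpq

section Face

variable {k n : ℕ} {m : Fin k → ℕ}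

/-- The affine isomorphism `ℝ^{m 0} × ⋯ × ℝ^{m (k-1)} ≃ ℝⁿ` that places the coordinate `(r, j)` at
`e (r, j)` and translates it by the offset of block `r`. -/
noncomputable def blockAffineEquiv (e : (Σ r, Fin (m r)) ≃ Fin n) :
    ((r : Fin k) → EuclideanSpace ℝ (Fin (m r))) ≃ᵃ[ℝ] EuclideanSpace ℝ (Fin n) :=
  ((LinearEquiv.piCongrRight fun r => WithLp.linearEquiv 2 ℝ (Fin (m r) → ℝ)) ≪≫ₗ
    (LinearEquiv.piCurry ℝ fun (r : Fin k) (_ : Fin (m r)) => ℝ).symm ≪≫ₗ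
    LinearEquiv.funCongrLeft ℝ ℝ e.symm ≪≫ₗ
    (WithLp.linearEquiv 2 ℝ (Fin n → ℝ)).symm).toAffineEquiv.trans
      (AffineEquiv.constVAdd ℝ _ (WithLp.toLp 2 fun i => (blockOffset m (e.symm i).1 : ℝ)))

theorem blockAffineEquiv_apply (e : (Σ r, Fin (m r)) ≃ Fin n)
    (x : (r : Fin k) → EuclideanSpace ℝ (Fin (m r))) (i : Fin n) :
    blockAffineEquiv e x i = blockOffset m (e.symm i).1 + x (e.symm i).1 (e.symm i).2 :=
  rfl

theorem blockAffineEquiv_permVec (hm : ∑ r, m r = n) (e : (Σ r, Fin (m r)) ≃ Fin n)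
    (σ : ∀ r, Equiv.Perm (Fin (m r))) :
    blockAffineEquiv e (fun r => permVec (m r) (σ r)) = permVec n (concatPerm hm e σ) := by
  ext i
  simp [blockAffineEquiv_apply, permVec, val_concatPerm_symm, add_assoc]

theorem setOf_forall_mem_permutahedron {ι : Type*} [Finite ι] (m : ι → ℕ) :
    {x : (r : ι) → EuclideanSpace ℝ (Fin (m r)) | ∀ r, x r ∈ permutahedron (m r)} =
      convexHull ℝ (Set.range (Pi.map fun r => permVec (m r))) := by
  rw [Set.range_piMap, convexHull_pi]
  ext x
  simp [permutahedron]

theorem image_blockAffineEquiv_permutahedra (e : (Σ r, Fin (m r)) ≃ Fin n) :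
    blockAffineEquiv e '' {x | ∀ r, x r ∈ permutahedron (m r)} =
      convexHull ℝ (permVec n '' {τ | Monotone fun p => (e.symm (τ p)).1}) := by
  have hm : ∑ r, m r = n := by simpa using Fintype.card_congr e
  have hvertices : blockAffineEquiv e ∘ Pi.map (fun r => permVec (m r)) =
      permVec n ∘ concatPerm hm e :=
    funext (blockAffineEquiv_permVec hm e)
  rw [setOf_forall_mem_permutahedron, ← AffineEquiv.coe_toAffineMap, AffineMap.image_convexHull,
    AffineEquiv.coe_toAffineMap, ← Set.range_comp, hvertices, Set.range_comp, range_concatPerm]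

end Face

/-- For an ordered partition `(B 0, …, B (k-1))` of `[n]` into nonempty pairwise disjoint
sets with `m r = |B r|`, there is an injective affine map
`f : ℝ^{m 0} × ⋯ × ℝ^{m (k-1)} → ℝⁿ` carrying `P_{m 0} × ⋯ × P_{m (k-1)}` exactly onto the
face of `P_n` given by the convex hull of the compatible vertices; i.e. that face is
affinely isomorphic to a product of smaller permutahedra. -/
theorem orderedPartition_face_product (n k : ℕ) (hn : 1 ≤ n) (hk : 1 ≤ k)
    (B : Fin k → Finset (Fin n)) (hne : ∀ r, (B r).Nonempty)
    (hdisj : ∀ p q, p ≠ q → Disjoint (B p) (B q))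
    (hcov : Finset.univ.biUnion B = Finset.univ) :
    ∃ f : ((r : Fin k) → EuclideanSpace ℝ (Fin ((B r).card))) →ᵃ[ℝ]
        EuclideanSpace ℝ (Fin n),
      Function.Injective f ∧
      f '' {x | ∀ r : Fin k, x r ∈ permutahedron ((B r).card)} =
        convexHull ℝ (permVec n '' {τ | PermCompatible n k B τ}) := by
  have hB := existsUnique_mem_of_disjoint_of_biUnion_eq_univ hdisj hcov
  refine ⟨(blockAffineEquiv (blockEquiv B hB)).toAffineMap,
    (blockAffineEquiv (blockEquiv B hB)).injective, ?_⟩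
  simpa only [AffineEquiv.coe_toAffineMap,
    permCompatible_iff_monotone (mem_iff_fst_blockEquiv_symm hB)] using
    image_blockAffineEquiv_permutahedra (blockEquiv B hB)
end

section
/- Let m ≥ 2 and ε > 0. Define the collar C_ε = {(x₁, …, x_{m−1}, x_m − δ) ∈ ℝ^m : (x₁,…,x_m) ∈ S^{m−1}₋, 0 ≤ δ ≤ ε} and the extended cell Ext = D^m ∪ C_ε ⊆ ℝ^m. Then there exists a continuous map H : Ext × [0,1] → Ext such that: (i) H(y,0) = y for all y ∈ Ext; (ii) H(y,t) = y for every y in the topological frontier of Ext in ℝ^m and every t ∈ [0,1]; (iii) H(x,t) = x for all x ∈ S^{m−1}₊ and all t, and the image of D^m under H(·,1) is S^{m−1}₊ (so H deformation retracts D^m onto the closed upper hemisphere); and (iv) H(·,1) restricted to C_ε is a homeomorphism from C_ε onto Ext. -/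
open scoped BigOperators

/-!
Cut space into lines parallel to the axis. The line over a point `p` of the horizontal unit disk
meets the ball in `[-r, r]`, where `r = √(1 - ‖p‖²)`, and meets the collar in `[-r - ε, -r]`.
Stretch the collar segment affinely onto `[-r - ε, r]` and send the ball segment to `r`. This is
jointly continuous in `r` and the height, fixes the two ends `-r - ε` and `r`, and is the identity
over the rim of the disk, where `r = 0`. So the straight-line homotopy from the identity, which
moves every point along its own line, is stationary on the frontier of the extended cell. All this
takes place line by line, so any real inner product space with a unit vector as axis will do.
-/

namespace ExtendedCell

open Set Metric AffineMap
open scoped RealInnerProductSpace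

section Fibre

variable {ε r s : ℝ}

/-- The time-one map on the vertical line whose ball segment is `[-r, r]`: on the collar segment
`[-r - ε, -r]` it is the affine bijection onto `[-r - ε, r]`, and on `[-r, r]` it is constantly `r`.
The affine part is written as the identity plus a multiple of `r`, so that it is the identity when
`r = 0`. -/
noncomputable def fibreStretch (ε r s : ℝ) : ℝ := min r (s + 2 * r * (s + r + ε) / ε)

/-- The affine bijection from `[-r - ε, r]` onto `[-r - ε, -r]`, inverse to `fibreStretch` on the
collar segment. -/
noncomputable def fibreCompress (ε r s : ℝ) : ℝ := s - 2 * r * (s + r + ε) / (2 * r + ε)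

lemma continuous_fibreStretch : Continuous (Function.uncurry (fibreStretch ε)) := by
  unfold fibreStretch Function.uncurry
  fun_prop

lemma continuousOn_fibreCompress (hε : 0 < ε) :
    ContinuousOn (Function.uncurry (fibreCompress ε)) (Ici 0 ×ˢ univ) := by
  have hne : ∀ z ∈ Ici (0 : ℝ) ×ˢ (univ : Set ℝ), 2 * z.1 + ε ≠ 0 := by
    rintro z ⟨hz : 0 ≤ z.1, -⟩
    positivity
  unfold fibreCompress Function.uncurry
  fun_prop (disch := assumption)

lemma fibreStretch_of_neg_le (hε : 0 < ε) (hr : 0 ≤ r) (hs : -r ≤ s) :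
    fibreStretch ε r s = r := by
  have : 2 * r ≤ 2 * r * (s + r + ε) / ε := by
    rw [le_div_iff₀ hε]
    gcongr
    linarith
  exact min_eq_left (by linarith)

lemma fibreStretch_of_le_neg (hε : 0 < ε) (hr : 0 ≤ r) (hs : s ≤ -r) :
    fibreStretch ε r s = s + 2 * r * (s + r + ε) / ε := by
  have : 2 * r * (s + r + ε) / ε ≤ 2 * r := by
    rw [div_le_iff₀ hε]
    gcongr
    linarith
  exact min_eq_right (by linarith)

lemma mapsTo_fibreStretch (hε : 0 < ε) (hr : 0 ≤ r) :
    MapsTo (fibreStretch ε r) (Icc (-r - ε) r) (Icc (-r - ε) r) := by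
  rintro s ⟨hs, -⟩
  have : 0 ≤ 2 * r * (s + r + ε) / ε :=
    div_nonneg (mul_nonneg (by linarith) (by linarith)) hε.le
  exact ⟨le_min (by linarith) (by linarith), min_le_left _ _⟩

lemma mapsTo_fibreCompress (hε : 0 < ε) (hr : 0 ≤ r) :
    MapsTo (fibreCompress ε r) (Icc (-r - ε) r) (Icc (-r - ε) (-r)) := by
  rintro s ⟨hs, hs'⟩
  have hpos : 0 < 2 * r + ε := by positivity
  have hlower : 2 * r * (s + r + ε) / (2 * r + ε) ≤ s + r + ε := by
    rw [div_le_iff₀ hpos]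
    nlinarith
  have hupper : s + r ≤ 2 * r * (s + r + ε) / (2 * r + ε) := by
    rw [le_div_iff₀ hpos]
    nlinarith
  unfold fibreCompress
  constructor <;> linarith

lemma leftInvOn_fibreCompress (hε : 0 < ε) (hr : 0 ≤ r) :
    LeftInvOn (fibreCompress ε r) (fibreStretch ε r) (Icc (-r - ε) (-r)) := by
  rintro s ⟨-, hs⟩
  rw [fibreStretch_of_le_neg hε hr hs, fibreCompress]
  field

lemma rightInvOn_fibreCompress (hε : 0 < ε) (hr : 0 ≤ r) :
    RightInvOn (fibreCompress ε r) (fibreStretch ε r) (Icc (-r - ε) r) := by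
  intro s hs
  rw [fibreStretch_of_le_neg hε hr (mapsTo_fibreCompress hε hr hs).2, fibreCompress]
  field

lemma fibreStretch_eq_self (hε : 0 < ε) (hr : 0 ≤ r) (hs : s ≤ r)
    (h : r = 0 ∨ s = -r - ε ∨ s = r) : fibreStretch ε r s = s := by
  rcases h with rfl | rfl | rfl
  · simpa [fibreStretch] using hs
  · rw [fibreStretch_of_le_neg hε hr (by linarith)]
    ring
  · exact fibreStretch_of_neg_le hε hr (by linarith)

end Fibre

variable {E : Type*} [NormedAddCommGroup E] [InnerProductSpace ℝ E]

/-- The component of `y` orthogonal to the unit vector `e`, which is thought of as vertical. -/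
noncomputable def horizontal (e y : E) : E := y - ⟪e, y⟫ • e

/-- Half the length of the chord cut out of the unit ball by the line through `y` in direction `e`.
It is `0` if the line misses the ball. -/
noncomputable def halfChord (e y : E) : ℝ := √(1 - ‖horizontal e y‖ ^ 2)

/-- The region over the closed horizontal unit disk whose vertical section along a line of
half chord `r` is `I r`. -/
def overDisk (e : E) (I : ℝ → Set ℝ) : Set E :=
  {y | ‖horizontal e y‖ ≤ 1 ∧ ⟪e, y⟫ ∈ I (halfChord e y)}

/-- The map preserving every vertical line and acting by `φ r` on the heights along a line of
half chord `r`. -/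
noncomputable def fibrewise (e : E) (φ : ℝ → ℝ → ℝ) (y : E) : E :=
  y + (φ (halfChord e y) ⟪e, y⟫ - ⟪e, y⟫) • e

/-- The part of the unit sphere on or above the horizontal hyperplane. -/
def upperHemisphere (e : E) : Set E := {x | ‖x‖ = 1 ∧ 0 ≤ ⟪e, x⟫}

/-- The part of the unit sphere on or below the horizontal hyperplane. -/
def lowerHemisphere (e : E) : Set E := {x | ‖x‖ = 1 ∧ ⟪e, x⟫ ≤ 0}

/-- The collar swept out by pushing the lower hemisphere down through distances up to `ε`. -/
def collar (e : E) (ε : ℝ) : Set E :=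
  {y | ∃ x ∈ lowerHemisphere e, ∃ δ : ℝ, 0 ≤ δ ∧ δ ≤ ε ∧ y = x - δ • e}

/-- The unit ball with the collar attached along the lower hemisphere. -/
def extendedCell (e : E) (ε : ℝ) : Set E := closedBall 0 1 ∪ collar e ε

/-- The time-one map of the homotopy: it collapses the ball onto the upper hemisphere and stretches
the collar over the extended cell. -/
noncomputable def stretch (e : E) (ε : ℝ) : E → E := fibrewise e (fibreStretch ε)

/-- The inverse of `stretch` on the collar. -/
noncomputable def compress (e : E) (ε : ℝ) : E → E := fibrewise e (fibreCompress ε)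

variable {e : E} {φ ψ : ℝ → ℝ → ℝ} {I J : ℝ → Set ℝ} {ε : ℝ}

lemma halfChord_nonneg (e y : E) : 0 ≤ halfChord e y := Real.sqrt_nonneg _

@[fun_prop]
lemma continuous_horizontal (e : E) : Continuous (horizontal e) := by
  unfold horizontal
  fun_prop

@[fun_prop]
lemma continuous_halfChord (e : E) : Continuous (halfChord e) := by
  unfold halfChord
  fun_prop

lemma continuous_fibrewise (e : E)
    (hφ : ContinuousOn (Function.uncurry φ) (Ici 0 ×ˢ univ)) : Continuous (fibrewise e φ) := by
  have hheight : Continuous fun y => φ (halfChord e y) ⟪e, y⟫ :=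
    hφ.comp_continuous (f := fun y => (halfChord e y, ⟪e, y⟫)) (by fun_prop)
      fun y => ⟨halfChord_nonneg e y, mem_univ _⟩
  exact continuous_id.add ((hheight.sub (by fun_prop)).smul continuous_const)

lemma lineMap_fibrewise (e : E) (φ : ℝ → ℝ → ℝ) (y : E) (t : ℝ) :
    lineMap y (fibrewise e φ y) t = fibrewise e (fun r s => lineMap s (φ r s) t) y := by
  simp only [fibrewise, lineMap_apply_module, smul_eq_mul]
  module

lemma eqOn_fibrewise_id (h : ∀ r, 0 ≤ r → EqOn (φ r) id (I r)) :
    EqOn (fibrewise e φ) id (overDisk e I) := fun y hy => by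
  simp [fibrewise, h _ (halfChord_nonneg e y) hy.2]

lemma overDisk_mono (h : ∀ r, 0 ≤ r → I r ⊆ J r) : overDisk e I ⊆ overDisk e J :=
  fun y hy => ⟨hy.1, h _ (halfChord_nonneg e y) hy.2⟩

lemma overDisk_union (e : E) (I J : ℝ → Set ℝ) :
    overDisk e I ∪ overDisk e J = overDisk e fun r => I r ∪ J r :=
  Set.ext fun _ => and_or_left.symm

lemma overDisk_congr (h : ∀ r, 0 ≤ r → I r = J r) : overDisk e I = overDisk e J :=
  (overDisk_mono fun r hr => (h r hr).subset).antisymm (overDisk_mono fun r hr => (h r hr).superset)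

lemma isClosed_overDisk_Icc {a b : ℝ → ℝ} (ha : Continuous a) (hb : Continuous b) :
    IsClosed (overDisk e fun r => Icc (a r) (b r)) := by
  simp only [overDisk, mem_Icc]
  exact (isClosed_le (by fun_prop) (by fun_prop)).and
    ((isClosed_le (by fun_prop) (by fun_prop)).and (isClosed_le (by fun_prop) (by fun_prop)))

lemma frontier_overDisk_Icc_subset {a b : ℝ → ℝ} (ha : Continuous a) (hb : Continuous b) :
    frontier (overDisk e fun r => Icc (a r) (b r)) ⊆
      overDisk e fun r => {s ∈ Icc (a r) (b r) | r = 0 ∨ s = a r ∨ s = b r} := by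
  intro y hy
  obtain ⟨hdisk, hIcc⟩ := (isClosed_overDisk_Icc ha hb).frontier_subset hy
  refine ⟨hdisk, hIcc, ?_⟩
  rcases frontier_inter_subset {y | ‖horizontal e y‖ ≤ 1}
    {y | ⟪e, y⟫ ∈ Icc (a (halfChord e y)) (b (halfChord e y))} hy with ⟨hrim, -⟩ | ⟨-, hends⟩
  · have : ‖horizontal e y‖ = 1 :=
      frontier_le_subset_eq (continuous_horizontal e).norm continuous_const hrim
    exact Or.inl (by simp [halfChord, this])
  · refine Or.inr ?_
    rcases frontier_inter_subset {y | a (halfChord e y) ≤ ⟪e, y⟫}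
      {y | ⟪e, y⟫ ≤ b (halfChord e y)} hends with ⟨hbottom, -⟩ | ⟨-, htop⟩
    · exact Or.inl (frontier_le_subset_eq (f := fun y => a (halfChord e y)) (g := fun y => ⟪e, y⟫)
        (by fun_prop) (by fun_prop) hbottom).symm
    · exact Or.inr (frontier_le_subset_eq (f := fun y => ⟪e, y⟫) (g := fun y => b (halfChord e y))
        (by fun_prop) (by fun_prop) htop)

lemma continuous_stretch (e : E) (ε : ℝ) : Continuous (stretch e ε) :=
  continuous_fibrewise e continuous_fibreStretch.continuousOn

lemma continuous_compress (e : E) (hε : 0 < ε) : Continuous (compress e ε) :=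
  continuous_fibrewise e (continuousOn_fibreCompress hε)

section UnitAxis

variable (he : ‖e‖ = 1)
include he

lemma inner_add_smul_axis (y : E) (c : ℝ) : ⟪e, y + c • e⟫ = ⟪e, y⟫ + c := by
  simp [inner_add_right, inner_smul_right, he]

lemma horizontal_add_smul_axis (y : E) (c : ℝ) : horizontal e (y + c • e) = horizontal e y := by
  rw [horizontal, inner_add_smul_axis he, horizontal]
  module

lemma halfChord_add_smul_axis (y : E) (c : ℝ) : halfChord e (y + c • e) = halfChord e y := by
  rw [halfChord, horizontal_add_smul_axis he, halfChord]

lemma add_smul_axis_mem_overDisk {y : E} {c : ℝ} :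
    y + c • e ∈ overDisk e I ↔ ‖horizontal e y‖ ≤ 1 ∧ ⟪e, y⟫ + c ∈ I (halfChord e y) := by
  simp only [overDisk, mem_ofPred_eq, horizontal_add_smul_axis he, halfChord_add_smul_axis he,
    inner_add_smul_axis he]

lemma mapsTo_fibrewise (h : ∀ r, 0 ≤ r → MapsTo (φ r) (I r) (J r)) :
    MapsTo (fibrewise e φ) (overDisk e I) (overDisk e J) := fun y hy => by
  rw [fibrewise, add_smul_axis_mem_overDisk he, add_sub_cancel]
  exact ⟨hy.1, h _ (halfChord_nonneg e y) hy.2⟩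

lemma leftInvOn_fibrewise (h : ∀ r, 0 ≤ r → LeftInvOn (ψ r) (φ r) (I r)) :
    LeftInvOn (fibrewise e ψ) (fibrewise e φ) (overDisk e I) := fun y hy => by
  have hfibre := h _ (halfChord_nonneg e y) hy.2
  rw [fibrewise, fibrewise, inner_add_smul_axis he, halfChord_add_smul_axis he, add_sub_cancel,
    hfibre]
  module

lemma norm_sq_eq_horizontal_add_inner (y : E) :
    ‖y‖ ^ 2 = ‖horizontal e y‖ ^ 2 + ⟪e, y⟫ ^ 2 := by
  rw [horizontal, norm_sub_sq_real, inner_smul_right, real_inner_comm, norm_smul, he, mul_one,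
    Real.norm_eq_abs, sq_abs]
  ring

lemma norm_horizontal_le (y : E) : ‖horizontal e y‖ ≤ ‖y‖ := by
  refine (sq_le_sq₀ (norm_nonneg _) (norm_nonneg _)).1 ?_
  linarith [norm_sq_eq_horizontal_add_inner he y, sq_nonneg ⟪e, y⟫]

lemma norm_le_one_iff {y : E} :
    ‖y‖ ≤ 1 ↔ ‖horizontal e y‖ ≤ 1 ∧ |⟪e, y⟫| ≤ halfChord e y := by
  rw [← and_iff_right_of_imp (norm_horizontal_le he y).trans]
  refine and_congr_right fun hdisk => ?_
  rw [halfChord, Real.le_sqrt (abs_nonneg _) (by simpa using hdisk), sq_abs,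
    ← sq_le_one_iff₀ (norm_nonneg y), norm_sq_eq_horizontal_add_inner he, le_sub_iff_add_le']

lemma norm_eq_one_iff {y : E} :
    ‖y‖ = 1 ↔ ‖horizontal e y‖ ≤ 1 ∧ |⟪e, y⟫| = halfChord e y := by
  rw [← and_iff_right_of_imp fun h : ‖y‖ = 1 => (norm_horizontal_le he y).trans h.le]
  refine and_congr_right fun hdisk => ?_
  rw [halfChord, eq_comm (a := |_|), Real.sqrt_eq_iff_eq_sq (by simpa using hdisk) (abs_nonneg _),
    sq_abs, ← pow_eq_one_iff_of_nonneg (norm_nonneg y) two_ne_zero,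
    norm_sq_eq_horizontal_add_inner he, sub_eq_iff_eq_add', eq_comm]

lemma closedBall_eq_overDisk : closedBall (0 : E) 1 = overDisk e fun r => Icc (-r) r := by
  ext y
  rw [mem_closedBall_zero_iff, norm_le_one_iff he, abs_le]
  rfl

lemma upperHemisphere_eq_overDisk : upperHemisphere e = overDisk e fun r => {r} := by
  ext y
  have := halfChord_nonneg e y
  rw [upperHemisphere, mem_ofPred_eq, norm_eq_one_iff he, and_assoc]
  refine and_congr_right fun _ => ⟨fun ⟨h, hy⟩ => by rwa [abs_of_nonneg hy] at h, ?_⟩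
  rintro (h : ⟪e, y⟫ = halfChord e y)
  simpa [h]

lemma lowerHemisphere_eq_overDisk : lowerHemisphere e = overDisk e fun r => {-r} := by
  ext y
  have := halfChord_nonneg e y
  rw [lowerHemisphere, mem_ofPred_eq, norm_eq_one_iff he, and_assoc]
  refine and_congr_right fun _ => ⟨fun ⟨h, hy⟩ => ?_, ?_⟩
  · rw [abs_of_nonpos hy] at h
    exact neg_eq_iff_eq_neg.1 h
  · rintro (h : ⟪e, y⟫ = -halfChord e y)
    simpa [h]

lemma collar_eq_overDisk (ε : ℝ) : collar e ε = overDisk e fun r => Icc (-r - ε) (-r) := by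
  ext y
  rw [collar, lowerHemisphere_eq_overDisk he]
  constructor
  · rintro ⟨x, ⟨hdisk, hx : ⟪e, x⟫ = _⟩, δ, hδ, hδε, rfl⟩
    rw [sub_eq_add_neg, ← neg_smul, add_smul_axis_mem_overDisk he, hx]
    exact ⟨hdisk, by linarith, by linarith⟩
  · rintro ⟨hdisk, hlower, hupper⟩
    refine ⟨y + (-halfChord e y - ⟪e, y⟫) • e, ?_, -halfChord e y - ⟪e, y⟫, by linarith,
      by linarith, (add_sub_cancel_right _ _).symm⟩
    rw [add_smul_axis_mem_overDisk he]
    exact ⟨hdisk, add_sub_cancel _ _⟩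

lemma extendedCell_eq_overDisk (hε : 0 < ε) :
    extendedCell e ε = overDisk e fun r => Icc (-r - ε) r := by
  rw [extendedCell, closedBall_eq_overDisk he, collar_eq_overDisk he, union_comm, overDisk_union]
  exact overDisk_congr fun r hr => Icc_union_Icc_eq_Icc (by linarith) (by linarith)

lemma mapsTo_stretch_extendedCell (hε : 0 < ε) :
    MapsTo (stretch e ε) (extendedCell e ε) (extendedCell e ε) := by
  rw [extendedCell_eq_overDisk he hε]
  exact mapsTo_fibrewise he fun _ hr => mapsTo_fibreStretch hε hr

lemma mapsTo_compress (hε : 0 < ε) :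
    MapsTo (compress e ε) (extendedCell e ε) (collar e ε) := by
  rw [extendedCell_eq_overDisk he hε, collar_eq_overDisk he]
  exact mapsTo_fibrewise he fun _ hr => mapsTo_fibreCompress hε hr

lemma leftInvOn_compress (hε : 0 < ε) :
    LeftInvOn (compress e ε) (stretch e ε) (collar e ε) := by
  rw [collar_eq_overDisk he]
  exact leftInvOn_fibrewise he fun _ hr => leftInvOn_fibreCompress hε hr

lemma rightInvOn_compress (hε : 0 < ε) :
    RightInvOn (compress e ε) (stretch e ε) (extendedCell e ε) := by
  rw [extendedCell_eq_overDisk he hε]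
  exact leftInvOn_fibrewise he fun _ hr => rightInvOn_fibreCompress hε hr

lemma eqOn_stretch_frontier (hε : 0 < ε) :
    EqOn (stretch e ε) id (frontier (extendedCell e ε)) := by
  rw [extendedCell_eq_overDisk he hε]
  refine EqOn.mono (frontier_overDisk_Icc_subset (by fun_prop) continuous_id) ?_
  exact eqOn_fibrewise_id fun r hr s ⟨hs, hends⟩ => fibreStretch_eq_self hε hr hs.2 hends

lemma eqOn_stretch_upperHemisphere (hε : 0 < ε) :
    EqOn (stretch e ε) id (upperHemisphere e) := by
  rw [upperHemisphere_eq_overDisk he]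
  exact eqOn_fibrewise_id fun r hr s (hs : s = r) =>
    fibreStretch_eq_self hε hr hs.le (Or.inr (Or.inr hs))

lemma mapsTo_stretch_closedBall (hε : 0 < ε) :
    MapsTo (stretch e ε) (closedBall 0 1) (upperHemisphere e) := by
  rw [closedBall_eq_overDisk he, upperHemisphere_eq_overDisk he]
  exact mapsTo_fibrewise he fun _ hr _ hs => fibreStretch_of_neg_le hε hr hs.1

lemma image_stretch_closedBall (hε : 0 < ε) :
    stretch e ε '' closedBall 0 1 = upperHemisphere e :=
  (mapsTo_stretch_closedBall he hε).image_subset.antisymm fun x hx =>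
    ⟨x, mem_closedBall_zero_iff.2 hx.1.le, eqOn_stretch_upperHemisphere he hε hx⟩

lemma lineMap_stretch_mem_extendedCell (hε : 0 < ε) {y : E} (hy : y ∈ extendedCell e ε) {t : ℝ}
    (ht : t ∈ Icc (0 : ℝ) 1) : lineMap y (stretch e ε y) t ∈ extendedCell e ε := by
  rw [extendedCell_eq_overDisk he hε] at hy ⊢
  rw [stretch, lineMap_fibrewise]
  exact mapsTo_fibrewise he (fun r hr s hs =>
    (convex_Icc _ _).lineMap_mem hs (mapsTo_fibreStretch hε hr hs) ht) hy

/-- The homeomorphism from the collar onto the extended cell given by `stretch`. -/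
noncomputable def collarHomeomorph (hε : 0 < ε) : collar e ε ≃ₜ extendedCell e ε where
  toFun := ((mapsTo_stretch_extendedCell he hε).mono_left subset_union_right).restrict
  invFun := (mapsTo_compress he hε).restrict
  left_inv y := Subtype.ext (leftInvOn_compress he hε y.2)
  right_inv y := Subtype.ext (rightInvOn_compress he hε y.2)
  continuous_toFun := (continuous_stretch e ε).continuousOn.mapsToRestrict _
  continuous_invFun := (continuous_compress e hε).continuousOn.mapsToRestrict _

end UnitAxis

section EuclideanSpace

variable {ι : Type*} [DecidableEq ι] (i : ι)

lemma toLp_update_sub (x : EuclideanSpace ℝ ι) (δ : ℝ) :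
    WithLp.toLp 2 (Function.update x i (x i - δ)) = x - δ • EuclideanSpace.single i 1 := by
  ext j
  obtain rfl | hj := eq_or_ne j i <;> simp [*]

variable [Fintype ι]

lemma upperHemisphere_single :
    upperHemisphere (EuclideanSpace.single i (1 : ℝ)) = {x | ‖x‖ = 1 ∧ 0 ≤ x i} := by
  simp [upperHemisphere, EuclideanSpace.inner_single_left]

lemma lowerHemisphere_single :
    lowerHemisphere (EuclideanSpace.single i (1 : ℝ)) = {x | ‖x‖ = 1 ∧ x i ≤ 0} := by
  simp [lowerHemisphere, EuclideanSpace.inner_single_left]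

lemma collar_single (ε : ℝ) :
    collar (EuclideanSpace.single i (1 : ℝ)) ε =
      {y | ∃ x ∈ lowerHemisphere (EuclideanSpace.single i (1 : ℝ)), ∃ δ : ℝ, 0 ≤ δ ∧ δ ≤ ε ∧
        y = WithLp.toLp 2 (Function.update x i (x i - δ))} := by
  simp only [collar, toLp_update_sub]

end EuclideanSpace

end ExtendedCell

open ExtendedCell in
theorem extended_cell_homotopy_general {E : Type*} [NormedAddCommGroup E] [InnerProductSpace ℝ E]
    {e : E} (he : ‖e‖ = 1) {ε : ℝ} (hε : 0 < ε) :
    ∃ H : E × ℝ → E,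
      ContinuousOn H (extendedCell e ε ×ˢ Set.Icc (0 : ℝ) 1) ∧
      (∀ y ∈ extendedCell e ε, ∀ t ∈ Set.Icc (0 : ℝ) 1, H (y, t) ∈ extendedCell e ε) ∧
      (∀ y ∈ extendedCell e ε, H (y, 0) = y) ∧
      (∀ y ∈ frontier (extendedCell e ε), ∀ t ∈ Set.Icc (0 : ℝ) 1, H (y, t) = y) ∧
      (∀ x ∈ upperHemisphere e, ∀ t ∈ Set.Icc (0 : ℝ) 1, H (x, t) = x) ∧
      ((fun x => H (x, 1)) '' Metric.closedBall 0 1 = upperHemisphere e) ∧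
      ∃ f : collar e ε ≃ₜ extendedCell e ε, ∀ y : collar e ε, (f y : E) = H (y.val, 1) := by
  have hcont := continuous_stretch e ε
  refine ⟨fun z => AffineMap.lineMap z.1 (stretch e ε z.1) z.2, by fun_prop,
    fun y hy t ht => lineMap_stretch_mem_extendedCell he hε hy ht,
    fun y _ => AffineMap.lineMap_apply_zero _ _, fun y hy t _ => ?_, fun x hx t _ => ?_, ?_,
    collarHomeomorph he hε, fun y => (AffineMap.lineMap_apply_one _ _).symm⟩
  · simp [eqOn_stretch_frontier he hε hy]
  · simp [eqOn_stretch_upperHemisphere he hε hx]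
  · simpa only [AffineMap.lineMap_apply_one] using image_stretch_closedBall he hε

/-- For `m ≥ 2` and `ε > 0`, the extended cell `Ext = D^m ∪ C_ε`, where `C_ε` is the
collar `{(x₁,…,x_{m−1}, x_m − δ) : (x₁,…,x_m) ∈ S^{m−1}₋, 0 ≤ δ ≤ ε}`, admits a homotopy
`H` which (i) starts at the identity, (ii) is the identity on the frontier of `Ext` at
all times, (iii) is the identity on `S^{m−1}₊` at all times and at time `1` retracts
`D^m` onto `S^{m−1}₊`, and (iv) at time `1` restricts to a homeomorphism from the collar
`C_ε` onto `Ext`. -/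
theorem extended_cell_homotopy (m : ℕ) (hm : 2 ≤ m) (ε : ℝ) (hε : 0 < ε) :
    ∀ last : Fin m, last = ⟨m - 1, by omega⟩ →
    ∀ D : Set (EuclideanSpace ℝ (Fin m)), D = {x | ‖x‖ ≤ 1} →
    ∀ Splus : Set (EuclideanSpace ℝ (Fin m)), Splus = {x | ‖x‖ = 1 ∧ 0 ≤ x last} →
    ∀ Sminus : Set (EuclideanSpace ℝ (Fin m)), Sminus = {x | ‖x‖ = 1 ∧ x last ≤ 0} →
    ∀ C : Set (EuclideanSpace ℝ (Fin m)),
      C = {y | ∃ x ∈ Sminus, ∃ δ : ℝ, 0 ≤ δ ∧ δ ≤ ε ∧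
            y = WithLp.toLp 2 (Function.update x last (x last - δ))} →
    ∀ Ext : Set (EuclideanSpace ℝ (Fin m)), Ext = D ∪ C →
    ∃ H : EuclideanSpace ℝ (Fin m) × ℝ → EuclideanSpace ℝ (Fin m),
      ContinuousOn H (Ext ×ˢ Set.Icc (0 : ℝ) 1) ∧
      (∀ y ∈ Ext, ∀ t ∈ Set.Icc (0 : ℝ) 1, H (y, t) ∈ Ext) ∧
      (∀ y ∈ Ext, H (y, 0) = y) ∧
      (∀ y ∈ frontier Ext, ∀ t ∈ Set.Icc (0 : ℝ) 1, H (y, t) = y) ∧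
      (∀ x ∈ Splus, ∀ t ∈ Set.Icc (0 : ℝ) 1, H (x, t) = x) ∧
      ((fun x => H (x, 1)) '' D = Splus) ∧
      ∃ e : C ≃ₜ Ext, ∀ y : C, (e y : EuclideanSpace ℝ (Fin m)) = H (y.val, 1) := by
  rintro last - D rfl Splus rfl Sminus rfl C rfl Ext rfl
  have hball : {x : EuclideanSpace ℝ (Fin m) | ‖x‖ ≤ 1} = Metric.closedBall 0 1 := by ext; simp
  rw [hball, ← ExtendedCell.upperHemisphere_single, ← ExtendedCell.lowerHemisphere_single,
    ← ExtendedCell.collar_single]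
  exact extended_cell_homotopy_general (by simp) hε
end

section
/- Let m ≥ 2 and ε > 0. The map H : (S^{m−1}₋ × [0,ε]) × [0,1] → ℝ^m sending ((x₁,…,x_m), δ, t) with (x₁,…,x_m) ∈ S^{m−1}₋ to (x₁, …, x_{m−1}, (x_m − δ) + t·((x_m − δ) + √(1 − x₁² − ⋯ − x_{m−1}²) + ε)·(2·√(1 − x₁² − ⋯ − x_{m−1}²))/ε) is continuous, takes values in Ext = D^m ∪ C_ε where C_ε = {(x₁,…,x_{m−1}, x_m − δ) : (x₁,…,x_m) ∈ S^{m−1}₋, 0 ≤ δ ≤ ε}, agrees at t = 0 with the inclusion of C_ε (parametrized by (x, δ) ↦ (x₁,…,x_{m−1}, x_m − δ)), and for each fixed t ∈ [0,1] is a homeomorphism onto its image; at t = 1 its image is all of Ext. -/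
open scoped BigOperators

/-!
Every line in the direction of the unit vector `e` that meets the unit ball does so in a chord
`[-s, s]`, the height being measured by the inner product with `e`. Along that line the lower
hemisphere is the point of height `-s`, the collar is the segment `[-s - ε, -s]`, and the homotopy
at time `t` is the decreasing affine map `δ ↦ -s + 2 t s - δ (1 + 2 t s / ε)` from `[0, ε]` onto
`[-s - ε, -s + 2 t s]`. The slope never vanishes, so the inverse is again given by a formula that is
continuous in the line, and at `t = 1` the segments fill the ball together with its collar.
-/

open Set
open scoped InnerProductSpace

section General

variable {X Y : Type*} [TopologicalSpace X] [TopologicalSpace Y]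

theorem exists_homeomorph_image_of_leftInvOn {f : X → Y} {g : Y → X} {s : Set X}
    (hf : ContinuousOn f s) (hg : ContinuousOn g (f '' s)) (hgf : LeftInvOn g f s) :
    ∃ φ : s ≃ₜ f '' s, ∀ x : s, (φ x : Y) = f x := by
  have hval : (f '' s).domRestrict g ∘ (mapsTo_image f s).restrict = Subtype.val :=
    funext fun x => hgf x.2
  have hemb : Topology.IsEmbedding (mapsTo_image f s).restrict :=
    .of_comp (hf.mapsToRestrict _) hg.domRestrict (hval ▸ .subtypeVal)
  exact ⟨hemb.toHomeomorphOfSurjective (surjective_mapsTo_image_restrict f s), fun _ => rfl⟩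

end General

section Collar

variable {E : Type*} [NormedAddCommGroup E] [InnerProductSpace ℝ E] {e : E} {ε t : ℝ}

/-- The distance from `x` to the axis `ℝ e`, for a unit vector `e`. -/
noncomputable def axisDist (e x : E) : ℝ :=
  ‖x - ⟪e, x⟫_ℝ • e‖

/-- Half the length of the chord that the unit ball cuts out of the line through `x` in the
direction of the unit vector `e`; it is `0` if the line misses the ball. -/
noncomputable def halfChord (e x : E) : ℝ :=
  √(1 - axisDist e x ^ 2)

/-- The closed lower hemisphere of the unit sphere, where `e` points upwards. -/
def lowerHemisphere (e : E) : Set E :=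
  {x | ‖x‖ = 1 ∧ ⟪e, x⟫_ℝ ≤ 0}

/-- The parameter space `S₋ × [0, ε]` of the collar. -/
def collarDomain (e : E) (ε : ℝ) : Set (E × ℝ) :=
  lowerHemisphere e ×ˢ Icc 0 ε

/-- The collar `C_ε` swept out by pushing the lower hemisphere down by at most `ε`. -/
def collar (e : E) (ε : ℝ) : Set E :=
  (fun p : E × ℝ => p.1 - p.2 • e) '' collarDomain e ε

/-- The extended cell `Ext`: the closed unit ball with the collar attached. -/
def extendedBall (e : E) (ε : ℝ) : Set E :=
  Metric.closedBall 0 1 ∪ collar e ε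

/-- The homotopy `H`, with points written as translates along `e` of points of the hemisphere. -/
noncomputable def collarHomotopy (e : E) (ε : ℝ) (q : (E × ℝ) × ℝ) : E :=
  q.1.1 + (q.2 * (⟪e, q.1.1⟫_ℝ - q.1.2 + halfChord e q.1.1 + ε) * (2 * halfChord e q.1.1) / ε
    - q.1.2) • e

/-- The image of the collar homotopy at time `t`: over each chord, the heights between the bottom
of the collar and the point reached by the lower end of the chord. -/
def collarStage (e : E) (ε t : ℝ) : Set E :=
  {y | axisDist e y ≤ 1 ∧
    ⟪e, y⟫_ℝ ∈ Icc (-halfChord e y - ε) (-halfChord e y + 2 * t * halfChord e y)}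

/-- The inverse of the collar homotopy at time `t`: drop `y` onto the lower hemisphere, and solve
`⟪e, y⟫ = -s + 2 t s - δ (1 + 2 t s / ε)` for `δ`. -/
noncomputable def collarInverse (e : E) (ε t : ℝ) (y : E) : E × ℝ :=
  (y + (-halfChord e y - ⟪e, y⟫_ℝ) • e,
    ((2 * t - 1) * halfChord e y - ⟪e, y⟫_ℝ) * ε / (ε + 2 * t * halfChord e y))

theorem halfChord_nonneg (e x : E) : 0 ≤ halfChord e x :=
  Real.sqrt_nonneg _

theorem axisDist_nonneg (e x : E) : 0 ≤ axisDist e x :=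
  norm_nonneg _

theorem halfChord_sq {x : E} (hx : axisDist e x ≤ 1) : halfChord e x ^ 2 = 1 - axisDist e x ^ 2 :=
  Real.sq_sqrt (sub_nonneg.2 (pow_le_one₀ (axisDist_nonneg e x) hx))

@[fun_prop]
theorem continuous_halfChord (e : E) : Continuous (halfChord e) := by
  unfold halfChord axisDist
  fun_prop

theorem continuous_collarHomotopy (e : E) (ε : ℝ) : Continuous (collarHomotopy e ε) := by
  unfold collarHomotopy
  fun_prop

theorem collarHomotopy_zero (e : E) (ε : ℝ) (p : E × ℝ) :
    collarHomotopy e ε (p, 0) = p.1 - p.2 • e := by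
  simp [collarHomotopy, sub_eq_add_neg]

theorem add_two_mul_mul_halfChord_pos (hε : 0 < ε) (ht : 0 ≤ t) (e x : E) :
    0 < ε + 2 * t * halfChord e x := by
  have := halfChord_nonneg e x
  positivity

theorem continuous_collarInverse (e : E) (hε : 0 < ε) (ht : 0 ≤ t) :
    Continuous (collarInverse e ε t) := by
  unfold collarInverse
  fun_prop (disch := exact fun y => (add_two_mul_mul_halfChord_pos hε ht e y).ne')

theorem collarStage_mono (e : E) (ε : ℝ) : Monotone (collarStage e ε) := by
  rintro t t' htt' y ⟨hy, hlow, hup⟩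
  have := halfChord_nonneg e y
  exact ⟨hy, hlow, hup.trans (by gcongr)⟩

section UnitVector

variable (he : ‖e‖ = 1)
include he

theorem inner_add_smul_self (x : E) (c : ℝ) : ⟪e, x + c • e⟫_ℝ = ⟪e, x⟫_ℝ + c := by
  simp [inner_add_right, inner_smul_right, he]

theorem axisDist_add_smul (x : E) (c : ℝ) : axisDist e (x + c • e) = axisDist e x := by
  rw [axisDist, inner_add_smul_self he, add_smul, add_sub_add_right_eq_sub, axisDist]

theorem halfChord_add_smul (x : E) (c : ℝ) : halfChord e (x + c • e) = halfChord e x := by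
  rw [halfChord, axisDist_add_smul he, halfChord]

theorem axisDist_sq_add_inner_sq (x : E) : axisDist e x ^ 2 + ⟪e, x⟫_ℝ ^ 2 = ‖x‖ ^ 2 := by
  rw [axisDist, norm_sub_sq_real, inner_smul_right, norm_smul, he, real_inner_comm,
    Real.norm_eq_abs, mul_one, sq_abs]
  ring

theorem norm_le_one_iff_abs_inner_le_halfChord {x : E} :
    ‖x‖ ≤ 1 ↔ axisDist e x ≤ 1 ∧ |⟪e, x⟫_ℝ| ≤ halfChord e x := by
  have hsq := axisDist_sq_add_inner_sq he x
  constructor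
  · intro hx
    have hx' : ‖x‖ ^ 2 ≤ 1 := pow_le_one₀ (norm_nonneg x) hx
    exact ⟨(sq_le_one_iff₀ (axisDist_nonneg e x)).1 (by linarith [sq_nonneg ⟪e, x⟫_ℝ]),
      Real.abs_le_sqrt (by linarith)⟩
  · rintro ⟨hx, habs⟩
    have hle : ⟪e, x⟫_ℝ ^ 2 ≤ halfChord e x ^ 2 := sq_le_sq' (abs_le.1 habs).1 (abs_le.1 habs).2
    rw [halfChord_sq hx] at hle
    exact (sq_le_one_iff₀ (norm_nonneg x)).1 (by linarith)

theorem mem_lowerHemisphere_iff_inner_eq {x : E} :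
    x ∈ lowerHemisphere e ↔ axisDist e x ≤ 1 ∧ ⟪e, x⟫_ℝ = -halfChord e x := by
  have hsq := axisDist_sq_add_inner_sq he x
  constructor
  · rintro ⟨hnorm, hx⟩
    refine ⟨((norm_le_one_iff_abs_inner_le_halfChord he).1 hnorm.le).1, ?_⟩
    have hchord : 1 - axisDist e x ^ 2 = ⟪e, x⟫_ℝ ^ 2 := by
      rw [hnorm] at hsq
      linarith
    rw [halfChord, hchord, Real.sqrt_sq_eq_abs, abs_of_nonpos hx, neg_neg]
  · rintro ⟨hdist, hx⟩
    rw [hx, neg_sq, halfChord_sq hdist, add_sub_cancel] at hsq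
    exact ⟨(pow_eq_one_iff_of_nonneg (norm_nonneg x) two_ne_zero).1 hsq.symm,
      hx.trans_le (neg_nonpos.2 (halfChord_nonneg e x))⟩

theorem halfChord_collarHomotopy (p : E × ℝ) (ε t : ℝ) :
    halfChord e (collarHomotopy e ε (p, t)) = halfChord e p.1 :=
  halfChord_add_smul he _ _

theorem inner_collarHomotopy {p : E × ℝ} (hp : p.1 ∈ lowerHemisphere e) (hε : ε ≠ 0) :
    ⟪e, collarHomotopy e ε (p, t)⟫_ℝ =
      -halfChord e p.1 + 2 * t * halfChord e p.1 - p.2 * (1 + 2 * t * halfChord e p.1 / ε) := by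
  rw [collarHomotopy, inner_add_smul_self he,
    ((mem_lowerHemisphere_iff_inner_eq he).1 hp).2]
  field_simp
  ring

theorem mapsTo_collarHomotopy (hε : 0 < ε) (ht : 0 ≤ t) :
    MapsTo (fun p => collarHomotopy e ε (p, t)) (collarDomain e ε) (collarStage e ε t) := by
  intro p hp
  have hs := halfChord_nonneg e p.1
  have hslope : 0 ≤ 1 + 2 * t * halfChord e p.1 / ε := by positivity
  have hbottom : ε * (1 + 2 * t * halfChord e p.1 / ε) = ε + 2 * t * halfChord e p.1 := by
    field_simp
  refine ⟨(axisDist_add_smul he _ _).trans_le ((mem_lowerHemisphere_iff_inner_eq he).1 hp.1).1, ?_⟩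
  rw [inner_collarHomotopy he hp.1 hε.ne', halfChord_collarHomotopy he]
  constructor
  · linarith [mul_le_mul_of_nonneg_right hp.2.2 hslope]
  · linarith [mul_nonneg hp.2.1 hslope]

theorem mapsTo_collarInverse (hε : 0 < ε) (ht : 0 ≤ t) :
    MapsTo (collarInverse e ε t) (collarStage e ε t) (collarDomain e ε) := by
  rintro y ⟨hy, hlow, hup⟩
  have hden := add_two_mul_mul_halfChord_pos hε ht e y
  refine ⟨(mem_lowerHemisphere_iff_inner_eq he).2 ?_, div_nonneg (mul_nonneg ?_ hε.le) hden.le,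
    (div_le_iff₀ hden).2 ?_⟩
  · simp only [collarInverse, axisDist_add_smul he, inner_add_smul_self he, halfChord_add_smul he]
    exact ⟨hy, by ring⟩
  · linarith
  · rw [mul_comm]
    gcongr
    linarith

theorem collarInverse_collarHomotopy {p : E × ℝ} (hp : p.1 ∈ lowerHemisphere e) (hε : 0 < ε)
    (ht : 0 ≤ t) : collarInverse e ε t (collarHomotopy e ε (p, t)) = p := by
  have hden := (add_two_mul_mul_halfChord_pos hε ht e p.1).ne'
  have hx := ((mem_lowerHemisphere_iff_inner_eq he).1 hp).2
  ext
  · simp only [collarInverse, halfChord_collarHomotopy he]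
    simp only [collarHomotopy, inner_add_smul_self he, hx]
    rw [add_assoc, ← add_smul, add_eq_left]
    exact smul_eq_zero_of_left (by ring) e
  · simp only [collarInverse, halfChord_collarHomotopy he, inner_collarHomotopy he hp hε.ne']
    field_simp
    ring

theorem collarHomotopy_collarInverse (hε : 0 < ε) (ht : 0 ≤ t) (y : E) :
    collarHomotopy e ε (collarInverse e ε t y, t) = y := by
  have hs := halfChord_nonneg e y
  simp only [collarHomotopy, collarInverse, halfChord_add_smul he, inner_add_smul_self he]
  rw [add_assoc, ← add_smul, add_eq_left]
  refine smul_eq_zero_of_left ?_ e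
  field_simp
  ring

theorem image_collarHomotopy (hε : 0 < ε) (ht : 0 ≤ t) :
    (fun p => collarHomotopy e ε (p, t)) '' collarDomain e ε = collarStage e ε t :=
  (InvOn.bijOn ⟨fun _ hp => collarInverse_collarHomotopy he hp.1 hε ht,
    fun y _ => collarHomotopy_collarInverse he hε ht y⟩
    (mapsTo_collarHomotopy he hε ht) (mapsTo_collarInverse he hε ht)).image_eq

theorem collarStage_zero (hε : 0 < ε) : collarStage e ε 0 = collar e ε := by
  simp only [← image_collarHomotopy he hε le_rfl, collarHomotopy_zero, collar]

theorem collarStage_one (hε : 0 < ε) : collarStage e ε 1 = extendedBall e ε := by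
  ext y
  have hs := halfChord_nonneg e y
  have htop : -halfChord e y + 2 * 1 * halfChord e y = halfChord e y := by ring
  have hsplit : Icc (-halfChord e y) (halfChord e y) ∪
      Icc (-halfChord e y - ε) (-halfChord e y) = Icc (-halfChord e y - ε) (halfChord e y) := by
    rw [union_comm, Icc_union_Icc_eq_Icc] <;> linarith
  rw [extendedBall, ← collarStage_zero he hε, mem_union, mem_closedBall_zero_iff,
    norm_le_one_iff_abs_inner_le_halfChord he, abs_le, ← mem_Icc]
  simp only [collarStage, mem_ofPred_eq, mul_zero, zero_mul, add_zero, ← and_or_left,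
    ← mem_union, hsplit, htop]

theorem collar_homotopy_general (hε : 0 < ε) :
    ContinuousOn (collarHomotopy e ε) (collarDomain e ε ×ˢ Icc 0 1) ∧
    (∀ p ∈ collarDomain e ε, ∀ t ∈ Icc (0 : ℝ) 1, collarHomotopy e ε (p, t) ∈ extendedBall e ε) ∧
    (∀ p ∈ collarDomain e ε, collarHomotopy e ε (p, 0) = p.1 - p.2 • e) ∧
    (∀ t ∈ Icc (0 : ℝ) 1,
      ∃ φ : collarDomain e ε ≃ₜ (fun p => collarHomotopy e ε (p, t)) '' collarDomain e ε,
        ∀ p : collarDomain e ε, (φ p : E) = collarHomotopy e ε (p, t)) ∧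
    (fun p => collarHomotopy e ε (p, 1)) '' collarDomain e ε = extendedBall e ε := by
  have hcont := continuous_collarHomotopy e ε
  refine ⟨hcont.continuousOn, fun p hp t ht => ?_, fun p _ => collarHomotopy_zero e ε p,
    fun t ht => exists_homeomorph_image_of_leftInvOn (by fun_prop)
      (continuous_collarInverse e hε ht.1).continuousOn
      (fun _ hp => collarInverse_collarHomotopy he hp.1 hε ht.1), ?_⟩
  · rw [← collarStage_one he hε]
    exact collarStage_mono e ε ht.2 (mapsTo_collarHomotopy he hε ht.1 hp)
  · rw [image_collarHomotopy he hε zero_le_one, collarStage_one he hε]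

end UnitVector

end Collar

section Coordinates

variable {ι : Type*} [DecidableEq ι]

theorem add_smul_single_one (i : ι) (x : EuclideanSpace ℝ ι) (c : ℝ) :
    x + c • EuclideanSpace.single i 1 = WithLp.toLp 2 (Function.update x.ofLp i (x i + c)) := by
  ext j
  obtain rfl | hj := eq_or_ne j i <;> simp [*]

theorem sub_smul_single_one (i : ι) (x : EuclideanSpace ℝ ι) (c : ℝ) :
    x - c • EuclideanSpace.single i 1 = WithLp.toLp 2 (Function.update x.ofLp i (x i - c)) := by
  rw [sub_eq_add_neg, ← neg_smul, add_smul_single_one, sub_eq_add_neg]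

variable [Fintype ι]

theorem inner_single_one (i : ι) (x : EuclideanSpace ℝ ι) :
    ⟪EuclideanSpace.single i 1, x⟫_ℝ = x i := by
  simp [EuclideanSpace.inner_single_left]

theorem axisDist_single_one_sq (i : ι) (x : EuclideanSpace ℝ ι) :
    axisDist (EuclideanSpace.single i 1) x ^ 2 = ∑ j ∈ Finset.univ.erase i, x j ^ 2 := by
  have hsq := axisDist_sq_add_inner_sq (e := EuclideanSpace.single i (1 : ℝ)) (by simp) x
  rwa [EuclideanSpace.real_norm_sq_eq, ← Finset.sum_erase_add _ _ (Finset.mem_univ i),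
    inner_single_one, add_left_inj] at hsq

theorem lowerHemisphere_single_one (i : ι) :
    lowerHemisphere (EuclideanSpace.single i 1) =
      {x : EuclideanSpace ℝ ι | ‖x‖ = 1 ∧ x i ≤ 0} := by
  simp only [lowerHemisphere, inner_single_one]

theorem extendedBall_single_one (i : ι) (ε : ℝ) :
    extendedBall (EuclideanSpace.single i 1) ε = {x : EuclideanSpace ℝ ι | ‖x‖ ≤ 1} ∪
      {y | ∃ x ∈ {x : EuclideanSpace ℝ ι | ‖x‖ = 1 ∧ x i ≤ 0}, ∃ δ : ℝ, 0 ≤ δ ∧ δ ≤ ε ∧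
        y = WithLp.toLp 2 (Function.update x.ofLp i (x i - δ))} := by
  ext y
  simp only [extendedBall, collar, collarDomain, lowerHemisphere_single_one, sub_smul_single_one,
    mem_union, mem_closedBall_zero_iff, mem_image, Prod.exists, mem_prod, mem_Icc, mem_ofPred_eq,
    and_assoc, exists_and_left, eq_comm (a := y)]

theorem collarHomotopy_single_one (i : ι) (ε : ℝ) :
    collarHomotopy (EuclideanSpace.single i 1) ε =
      fun q : (EuclideanSpace ℝ ι × ℝ) × ℝ => WithLp.toLp 2 (Function.update q.1.1.ofLp i
        ((q.1.1 i - q.1.2) +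
          q.2 * ((q.1.1 i - q.1.2) + √(1 - ∑ j ∈ Finset.univ.erase i, q.1.1 j ^ 2) + ε) *
            (2 * √(1 - ∑ j ∈ Finset.univ.erase i, q.1.1 j ^ 2)) / ε)) := by
  funext q
  simp only [collarHomotopy, halfChord, add_smul_single_one, axisDist_single_one_sq,
    inner_single_one]
  ring_nf

end Coordinates

/-- For `m ≥ 2`, `ε > 0`, the explicit collar homotopy
`H((x₁,…,x_m), δ, t) = (x₁,…,x_{m−1}, (x_m−δ) + t((x_m−δ) + √(1−x₁²−⋯−x_{m−1}²) + ε)·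
(2√(1−x₁²−⋯−x_{m−1}²))/ε)` on `S^{m−1}₋ × [0,ε]` is continuous, takes values in the
extended cell `Ext = D^m ∪ C_ε`, agrees at `t = 0` with the inclusion of the collar
`C_ε` (parametrized by `(x,δ) ↦ (x₁,…,x_{m−1}, x_m − δ)`), is for each fixed `t` a
homeomorphism onto its image, and at `t = 1` has image all of `Ext`. -/
theorem collar_homotopy (m : ℕ) (hm : 2 ≤ m) (ε : ℝ) (hε : 0 < ε) :
    ∀ last : Fin m, last = ⟨m - 1, by omega⟩ →
    ∀ D : Set (EuclideanSpace ℝ (Fin m)), D = {x | ‖x‖ ≤ 1} →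
    ∀ Sminus : Set (EuclideanSpace ℝ (Fin m)), Sminus = {x | ‖x‖ = 1 ∧ x last ≤ 0} →
    ∀ C : Set (EuclideanSpace ℝ (Fin m)),
      C = {y | ∃ x ∈ Sminus, ∃ δ : ℝ, 0 ≤ δ ∧ δ ≤ ε ∧
            y = WithLp.toLp 2 (Function.update x.ofLp last (x last - δ))} →
    ∀ Ext : Set (EuclideanSpace ℝ (Fin m)), Ext = D ∪ C →
    ∀ K : Set (EuclideanSpace ℝ (Fin m) × ℝ), K = Sminus ×ˢ Set.Icc (0 : ℝ) ε →
    ∀ H : (EuclideanSpace ℝ (Fin m) × ℝ) × ℝ → EuclideanSpace ℝ (Fin m),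
      (H = fun q => WithLp.toLp 2 (Function.update q.1.1.ofLp last
        ((q.1.1 last - q.1.2) +
          q.2 * ((q.1.1 last - q.1.2) +
              Real.sqrt (1 - ∑ i ∈ Finset.univ.erase last, (q.1.1 i) ^ 2) + ε) *
            (2 * Real.sqrt (1 - ∑ i ∈ Finset.univ.erase last, (q.1.1 i) ^ 2)) / ε))) →
    ContinuousOn H (K ×ˢ Set.Icc (0 : ℝ) 1) ∧
    (∀ p ∈ K, ∀ t ∈ Set.Icc (0 : ℝ) 1, H (p, t) ∈ Ext) ∧
    (∀ p ∈ K, H (p, 0) = WithLp.toLp 2 (Function.update p.1.ofLp last (p.1 last - p.2))) ∧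
    (∀ t ∈ Set.Icc (0 : ℝ) 1,
      ∃ e : K ≃ₜ {y : EuclideanSpace ℝ (Fin m) | ∃ p ∈ K, H (p, t) = y},
        ∀ p : K, (e p : EuclideanSpace ℝ (Fin m)) = H (p.val, t)) ∧
    {y : EuclideanSpace ℝ (Fin m) | ∃ p ∈ K, H (p, 1) = y} = Ext := by
  rintro last - _ rfl _ rfl _ rfl _ rfl _ rfl _ rfl
  rw [← collarHomotopy_single_one, ← extendedBall_single_one, ← lowerHemisphere_single_one]
  simp only [← sub_smul_single_one]
  exact collar_homotopy_general (by simp) hε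
end
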